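/- For all real numbers a, b and all complex numbers s, r with Re(s) > |a| and Re(r) > |b|, the double complex EE transform of f(x,t) = cosh(a x + b t) equals (s r + a b)/((s² − a²)(r² − b²)); that is, ∫₀^∞ ∫₀^∞ cosh(a x + b t) e^{-(s x + r t)} dt dx = (s r + a b)/((s² − a²)(r² − b²)). (In the paper's variables s = iuⁿ, r = ivⁿ this is the formula D_EE{cosh(ax+bt)} = (ab − (uv)ⁿ)/((a² + u^{2n})(b² + v^{2n})).) -/

import Mathlib

/-!
The addition formula `cosh (a x + b t) = cosh (a x) cosh (b t) + sinh (a x) sinh (b t)` separates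
the variables, so the double transform is a sum of two products of one-variable Laplace transforms,
those of `cosh (a x)` and `sinh (a x)` being `s / (s² - a²)` and `a / (s² - a²)`.
-/

open MeasureTheory

theorem integral_integral_mul_add_mul {α β 𝕜 : Type*} [RCLike 𝕜] [MeasurableSpace α]
    [MeasurableSpace β] {μ : Measure α} {ν : Measure β} {f₁ f₂ : α → 𝕜} {g₁ g₂ : β → 𝕜}
    (hf₁ : Integrable f₁ μ) (hf₂ : Integrable f₂ μ)
    (hg₁ : Integrable g₁ ν) (hg₂ : Integrable g₂ ν) :
    ∫ x, ∫ y, (f₁ x * g₁ y + f₂ x * g₂ y) ∂ν ∂μ =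
      (∫ x, f₁ x ∂μ) * (∫ y, g₁ y ∂ν) + (∫ x, f₂ x ∂μ) * ∫ y, g₂ y ∂ν := by
  have inner (x : α) : ∫ y, (f₁ x * g₁ y + f₂ x * g₂ y) ∂ν =
      f₁ x * (∫ y, g₁ y ∂ν) + f₂ x * ∫ y, g₂ y ∂ν := by
    rw [integral_add (hg₁.const_mul _) (hg₂.const_mul _), integral_const_mul, integral_const_mul]
  simp_rw [inner]
  rw [integral_add (hf₁.mul_const _) (hf₂.mul_const _), integral_mul_const, integral_mul_const]

section LaplaceTransform

variable {a s : ℂ}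

theorem neg_re_lt_of_abs_re_lt (h : |a.re| < s.re) : (-a).re < s.re :=
  (neg_le_abs a.re).trans_lt h

theorem sub_ne_zero_of_re_lt (h : a.re < s.re) : s - a ≠ 0 :=
  sub_ne_zero.mpr (ne_of_apply_ne Complex.re h.ne')

theorem exp_mul_mul_exp_neg_mul (a s x : ℂ) :
    Complex.exp (a * x) * Complex.exp (-(s * x)) = Complex.exp ((a - s) * x) := by
  rw [← Complex.exp_add]
  ring_nf

theorem integrableOn_exp_mul_exp_neg_Ioi (h : a.re < s.re) (c : ℝ) :
    IntegrableOn (fun x : ℝ ↦ Complex.exp (a * x) * Complex.exp (-(s * x))) (Set.Ioi c) := by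
  simp_rw [exp_mul_mul_exp_neg_mul]
  exact integrableOn_exp_mul_complex_Ioi (by simpa using h) c

theorem integral_exp_mul_exp_neg_Ioi_zero (h : a.re < s.re) :
    ∫ x in Set.Ioi (0 : ℝ), Complex.exp (a * x) * Complex.exp (-(s * x)) = (s - a)⁻¹ := by
  simp_rw [exp_mul_mul_exp_neg_mul]
  rw [integral_exp_mul_complex_Ioi (by simpa using h), Complex.ofReal_zero, mul_zero,
    Complex.exp_zero, ← neg_sub s a, neg_div_neg_eq, one_div]

theorem cosh_mul_mul_exp_neg_mul (a s x : ℂ) :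
    Complex.cosh (a * x) * Complex.exp (-(s * x)) =
      (Complex.exp (a * x) * Complex.exp (-(s * x)) +
        Complex.exp (-a * x) * Complex.exp (-(s * x))) / 2 := by
  rw [Complex.cosh, neg_mul]
  ring

theorem sinh_mul_mul_exp_neg_mul (a s x : ℂ) :
    Complex.sinh (a * x) * Complex.exp (-(s * x)) =
      (Complex.exp (a * x) * Complex.exp (-(s * x)) -
        Complex.exp (-a * x) * Complex.exp (-(s * x))) / 2 := by
  rw [Complex.sinh, neg_mul]
  ring

theorem integrableOn_cosh_mul_exp_neg_Ioi (h : |a.re| < s.re) (c : ℝ) :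
    IntegrableOn (fun x : ℝ ↦ Complex.cosh (a * x) * Complex.exp (-(s * x))) (Set.Ioi c) := by
  simp_rw [cosh_mul_mul_exp_neg_mul]
  exact ((integrableOn_exp_mul_exp_neg_Ioi (lt_of_abs_lt h) c).add
    (integrableOn_exp_mul_exp_neg_Ioi (neg_re_lt_of_abs_re_lt h) c)).div_const 2

theorem integrableOn_sinh_mul_exp_neg_Ioi (h : |a.re| < s.re) (c : ℝ) :
    IntegrableOn (fun x : ℝ ↦ Complex.sinh (a * x) * Complex.exp (-(s * x))) (Set.Ioi c) := by
  simp_rw [sinh_mul_mul_exp_neg_mul]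
  exact ((integrableOn_exp_mul_exp_neg_Ioi (lt_of_abs_lt h) c).sub
    (integrableOn_exp_mul_exp_neg_Ioi (neg_re_lt_of_abs_re_lt h) c)).div_const 2

theorem integral_cosh_mul_exp_neg_Ioi_zero (h : |a.re| < s.re) :
    ∫ x in Set.Ioi (0 : ℝ), Complex.cosh (a * x) * Complex.exp (-(s * x)) =
      s / (s ^ 2 - a ^ 2) := by
  have h_pos := lt_of_abs_lt h
  have h_neg := neg_re_lt_of_abs_re_lt h
  have h_sub : s - a ≠ 0 := sub_ne_zero_of_re_lt h_pos
  have h_add : s + a ≠ 0 := by simpa using sub_ne_zero_of_re_lt h_neg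
  simp_rw [cosh_mul_mul_exp_neg_mul]
  rw [integral_div, integral_add (integrableOn_exp_mul_exp_neg_Ioi h_pos 0)
      (integrableOn_exp_mul_exp_neg_Ioi h_neg 0),
    integral_exp_mul_exp_neg_Ioi_zero h_pos, integral_exp_mul_exp_neg_Ioi_zero h_neg,
    sub_neg_eq_add, sq_sub_sq]
  field_simp
  ring

theorem integral_sinh_mul_exp_neg_Ioi_zero (h : |a.re| < s.re) :
    ∫ x in Set.Ioi (0 : ℝ), Complex.sinh (a * x) * Complex.exp (-(s * x)) =
      a / (s ^ 2 - a ^ 2) := by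
  have h_pos := lt_of_abs_lt h
  have h_neg := neg_re_lt_of_abs_re_lt h
  have h_sub : s - a ≠ 0 := sub_ne_zero_of_re_lt h_pos
  have h_add : s + a ≠ 0 := by simpa using sub_ne_zero_of_re_lt h_neg
  simp_rw [sinh_mul_mul_exp_neg_mul]
  rw [integral_div, integral_sub (integrableOn_exp_mul_exp_neg_Ioi h_pos 0)
      (integrableOn_exp_mul_exp_neg_Ioi h_neg 0),
    integral_exp_mul_exp_neg_Ioi_zero h_pos, integral_exp_mul_exp_neg_Ioi_zero h_neg,
    sub_neg_eq_add, sq_sub_sq]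
  field_simp
  ring

end LaplaceTransform

theorem cosh_add_mul_exp_neg_add (x y u v : ℂ) :
    Complex.cosh (x + y) * Complex.exp (-(u + v)) =
      Complex.cosh x * Complex.exp (-u) * (Complex.cosh y * Complex.exp (-v)) +
        Complex.sinh x * Complex.exp (-u) * (Complex.sinh y * Complex.exp (-v)) := by
  rw [Complex.cosh_add, neg_add, Complex.exp_add]
  ring

theorem double_EE_transform_cosh_general {a b s r : ℂ}
    (hs : |a.re| < s.re) (hr : |b.re| < r.re) :
    ∫ x in Set.Ioi (0 : ℝ), ∫ t in Set.Ioi (0 : ℝ),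
      Complex.cosh (a * x + b * t) * Complex.exp (-(s * x + r * t)) =
      (s * r + a * b) / ((s ^ 2 - a ^ 2) * (r ^ 2 - b ^ 2)) := by
  simp_rw [cosh_add_mul_exp_neg_add]
  rw [integral_integral_mul_add_mul
      (integrableOn_cosh_mul_exp_neg_Ioi hs 0) (integrableOn_sinh_mul_exp_neg_Ioi hs 0)
      (integrableOn_cosh_mul_exp_neg_Ioi hr 0) (integrableOn_sinh_mul_exp_neg_Ioi hr 0),
    integral_cosh_mul_exp_neg_Ioi_zero hs, integral_cosh_mul_exp_neg_Ioi_zero hr,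
    integral_sinh_mul_exp_neg_Ioi_zero hs, integral_sinh_mul_exp_neg_Ioi_zero hr,
    div_mul_div_comm, div_mul_div_comm, ← add_div]

/-- The double complex EE transform of `f(x,t) = cosh(a x + b t)`:
`∫₀^∞ ∫₀^∞ cosh(a x + b t) e^{-(s x + r t)} dt dx = (s r + a b)/((s² - a²)(r² - b²))`
for `Re s > |a|`, `Re r > |b|`. -/
theorem double_EE_transform_cosh (a b : ℝ) (s r : ℂ) (hs : |a| < s.re) (hr : |b| < r.re) :
    (∫ x in Set.Ioi (0 : ℝ), ∫ t in Set.Ioi (0 : ℝ),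
      (Real.cosh (a * x + b * t) : ℂ) * Complex.exp (-(s * x + r * t)))
      = (s * r + (a : ℂ) * b) / ((s ^ 2 - (a : ℂ) ^ 2) * (r ^ 2 - (b : ℂ) ^ 2)) := by
  simpa using double_EE_transform_cosh_general (a := a) (b := b) hs hr
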